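/- Leau–Fatou attracting petals exist for P_ω: there exist q pairwise disjoint open connected sets U_0, …, U_{q−1} ⊆ Λ_ω such that for each j the point 0 lies in the frontier of U_j, P_ω(U_j) ⊆ U_{(j+p) mod q} (so each U_j satisfies P_ω^q(U_j) ⊆ U_j), and for every z ∈ U_j the iterates P_ω^n(z) converge to 0 as n → ∞. -/

import Mathlib

open Complex Filter Topology Set

/-- The quadratic polynomial `P_ω(z) = ω z + z²`. -/
noncomputable def Pq (ω : ℂ) : ℂ → ℂ := fun z => ω * z + z ^ 2

/-- The augmented parabolic basin `Λ̃_ω`: points whose orbit converges to `0`. -/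
def basinAug (ω : ℂ) : Set ℂ := {z | Tendsto (fun n => (Pq ω)^[n] z) atTop (𝓝 0)}

/-- The backward orbit of the parabolic fixed point `0`. -/
def preFixed (ω : ℂ) : Set ℂ := {z | ∃ n : ℕ, (Pq ω)^[n] z = 0}

/-- The parabolic basin `Λ_ω`. -/
def basin (ω : ℂ) : Set ℂ := basinAug ω \ preFixed ω


/-!
Let `f` be an analytic germ fixing `0` whose multiplier `ω` is a primitive `q`-th root of unity.
The multiplier of `f^[q]` is `1`, so near `0` it has the form `z * exp (L z)` with
`L z ~ a * z ^ m`. Take a direction `v` along which `a * v ^ m` is negative and put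
`z = v * exp s`: a thin sector around `v` becomes a thin left half-strip, and `f^[q]` becomes
`s ↦ s - exp (m * s) / m + ⋯`, which preserves the half-strip and drives `Re s` to `-∞`. This
gives one petal `V` with `f^[q] '' V ⊆ V`. Its images under `f^[j]`, `j < q`, are the others: they
lie in narrow sectors around the directions `ω ^ j * v`, which are at mutual angle at least
`2π / q`.
-/

open Asymptotics

/-! ### Iteration near a fixed point -/

section Iterate

lemma tendsto_atBot_of_succ_le_map {α : Type*} [ConditionallyCompleteLinearOrder α]
    [TopologicalSpace α] [OrderTopology α] {φ : α → α} (hφ : Continuous φ) (hφ_lt : ∀ y, φ y < y)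
    {x : ℕ → α} (hx : ∀ n, x (n + 1) ≤ φ (x n)) : Tendsto x atTop atBot := by
  have hanti : Antitone x := antitone_nat_of_succ_le fun n => (hx n).trans (hφ_lt _).le
  refine (tendsto_atTop_of_antitone hanti).resolve_right ?_
  rintro ⟨y, hy⟩
  have hle : y ≤ φ y :=
    le_of_tendsto_of_tendsto' ((tendsto_add_atTop_iff_nat 1).2 hy) ((hφ.tendsto y).comp hy) hx
  exact (hφ_lt y).not_ge hle

lemma ne_zero_of_not_iterate_eventuallyEq_id {X : Type*} {f : X → X} {l : Filter X} {q : ℕ}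
    (hid : ¬ f^[q] =ᶠ[l] id) : q ≠ 0 := by
  rintro rfl
  exact hid .rfl

lemma tendsto_iterate_of_tendsto_iterate_iterate {X : Type*} [TopologicalSpace X] {f : X → X}
    {x z : X} {q : ℕ} (hq : q ≠ 0) (hf : ContinuousAt f x) (hx : f x = x)
    (h : Tendsto (fun n => (f^[q])^[n] z) atTop (𝓝 x)) :
    Tendsto (fun n => f^[n] z) atTop (𝓝 x) := by
  have hf_self : Tendsto f (𝓝 x) (𝓝 x) := by simpa only [hx] using hf.tendsto
  refine tendsto_def.2 fun s hs => ?_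
  have hall : ∀ᶠ k in atTop, ∀ j ∈ Finset.range q, f^[j] ((f^[q])^[k] z) ∈ s :=
    (eventually_all_finset _).2 fun j _ => ((hf_self.iterate j).comp h) hs
  filter_upwards [(Nat.tendsto_div_const_atTop hq).eventually hall] with n hn
  have hmem := hn (n % q) (Finset.mem_range.2 (Nat.mod_lt n (Nat.pos_of_ne_zero hq)))
  rwa [← Function.iterate_mul, ← Function.iterate_add_apply, Nat.mod_add_div] at hmem

lemma analyticAt_iterate {𝕜 E : Type*} [NontriviallyNormedField 𝕜] [NormedAddCommGroup E]
    [NormedSpace 𝕜 E] {f : E → E} {x : E} (hf : AnalyticAt 𝕜 f x) (hx : f x = x) (n : ℕ) :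
    AnalyticAt 𝕜 f^[n] x := by
  induction n with
  | zero => exact analyticAt_id
  | succ n ih =>
    rw [Function.iterate_succ]
    exact AnalyticAt.comp (by rwa [hx]) hf

lemma mapsTo_image_iterate_val_add_one {X : Type*} {f : X → X} {U : Set X} {q : ℕ} [NeZero q]
    (hU : MapsTo f^[q] U U) (j : ZMod q) :
    MapsTo f (f^[j.val] '' U) (f^[(j + 1).val] '' U) := by
  rintro _ ⟨z, hz, rfl⟩
  rw [← Function.iterate_succ_apply' f]
  have hval : (j + 1).val = (j.val + 1) % q := by
    rw [← ZMod.val_natCast, Nat.cast_add, ZMod.natCast_zmod_val, Nat.cast_one]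
  rcases (Nat.succ_le_of_lt j.val_lt).lt_or_eq with hlt | heq
  · exact ⟨z, hz, by rw [hval, Nat.mod_eq_of_lt hlt]⟩
  · exact ⟨f^[q] z, hU hz, by rw [hval, ← Nat.succ_eq_add_one, heq, Nat.mod_self]; rfl⟩

lemma isOpen_image_of_deriv_ne_zero {𝕜 : Type*} [NontriviallyNormedField 𝕜] [CompleteSpace 𝕜]
    {g : 𝕜 → 𝕜} {U : Set 𝕜} (hU : IsOpen U) (hg : AnalyticOnNhd 𝕜 g U)
    (hg' : ∀ z ∈ U, deriv g z ≠ 0) : IsOpen (g '' U) := by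
  rw [isOpen_iff_mem_nhds]
  rintro _ ⟨z, hz, rfl⟩
  rw [← (hg z hz).hasStrictDerivAt.map_nhds_eq (hg' z hz)]
  exact image_mem_map (hU.mem_nhds hz)

end Iterate

/-! ### Attracting petals -/

/-- An attracting petal of period `q` of `f` at the fixed point `0`: a domain avoiding `0` that
`f^[q]` maps into itself and whose points are attracted to `0` under iteration of `f`. -/
structure IsAttractingPetal (f : ℂ → ℂ) (q : ℕ) (U : Set ℂ) : Prop where
  isOpen : IsOpen U
  isConnected : IsConnected U
  zero_notMem : (0 : ℂ) ∉ U
  mapsTo : MapsTo f^[q] U U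
  tendsto : ∀ z ∈ U, Tendsto (fun n => f^[n] z) atTop (𝓝 0)

namespace IsAttractingPetal

variable {f : ℂ → ℂ} {q : ℕ} {U : Set ℂ}

lemma of_iterate (hq : q ≠ 0) (hf : ContinuousAt f 0) (hf0 : f 0 = 0)
    (hU : IsAttractingPetal f^[q] 1 U) : IsAttractingPetal f q U where
  isOpen := hU.isOpen
  isConnected := hU.isConnected
  zero_notMem := hU.zero_notMem
  mapsTo := hU.mapsTo
  tendsto z hz := tendsto_iterate_of_tendsto_iterate_iterate hq hf hf0 (hU.tendsto z hz)

lemma iterate_ne_zero (hU : IsAttractingPetal f q U) (hq : q ≠ 0) (hf0 : f 0 = 0) {z : ℂ}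
    (hz : z ∈ U) (n : ℕ) : f^[n] z ≠ 0 := by
  intro hn
  have hmem : f^[q * n] z ∈ U := by
    rw [Function.iterate_mul]
    exact hU.mapsTo.iterate n hz
  obtain ⟨k, hk⟩ := Nat.exists_eq_add_of_le' (Nat.le_mul_of_pos_left n (Nat.pos_of_ne_zero hq))
  rw [hk, Function.iterate_add_apply, hn, Function.iterate_fixed hf0] at hmem
  exact hU.zero_notMem hmem

lemma zero_mem_frontier (hU : IsAttractingPetal f q U) (hq : q ≠ 0) : (0 : ℂ) ∈ frontier U := by
  obtain ⟨z, hz⟩ := hU.isConnected.nonempty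
  have hlim : Tendsto (fun n => f^[q * n] z) atTop (𝓝 0) :=
    (hU.tendsto z hz).comp (tendsto_id.const_mul_atTop' (Nat.pos_of_ne_zero hq))
  refine hU.isOpen.frontier_eq ▸ ⟨mem_closure_of_tendsto hlim (.of_forall fun n => ?_),
    hU.zero_notMem⟩
  rw [Function.iterate_mul]
  exact hU.mapsTo.iterate n hz

lemma image_iterate (hU : IsAttractingPetal f q U) (hq : q ≠ 0) (hf0 : f 0 = 0) {j : ℕ}
    (hj : AnalyticOnNhd ℂ f^[j] U) (hj' : ∀ z ∈ U, deriv f^[j] z ≠ 0) :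
    IsAttractingPetal f q (f^[j] '' U) where
  isOpen := isOpen_image_of_deriv_ne_zero hU.isOpen hj hj'
  isConnected := hU.isConnected.image _ hj.continuousOn
  zero_notMem := by
    rintro ⟨z, hz, hz0⟩
    exact hU.iterate_ne_zero hq hf0 hz j hz0
  mapsTo := by
    rintro _ ⟨z, hz, rfl⟩
    exact ⟨f^[q] z, hU.mapsTo hz, (Function.Commute.iterate_iterate_self f j q).eq z⟩
  tendsto := by
    rintro _ ⟨z, hz, rfl⟩
    simpa only [← Function.iterate_add_apply] using
      (tendsto_add_atTop_iff_nat j).2 (hU.tendsto z hz)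

end IsAttractingPetal

/-! ### Sectors -/

/-- The left half-strip `Re s < c`, `|Im s| < δ`, in which sectors at `0` are parametrised by
the exponential. -/
def halfStrip (δ c : ℝ) : Set ℂ := {s | s.re < c ∧ |s.im| < δ}

/-- The open sector at `0` around the direction `v`, with half-angle `δ` and radius `‖v‖ * exp c`.
It is defined as an image of a half-strip, so that no branch of the argument is chosen. -/
def sector (v : ℂ) (δ c : ℝ) : Set ℂ := (fun s => v * exp s) '' halfStrip δ c

section Sector

variable {v : ℂ} {δ c : ℝ}

lemma isOpen_halfStrip : IsOpen (halfStrip δ c) :=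
  (isOpen_Iio.preimage continuous_re).inter (isOpen_Iio.preimage continuous_im.abs)

lemma isConnected_halfStrip (hδ : 0 < δ) : IsConnected (halfStrip δ c) := by
  have hconv : Convex ℝ (halfStrip δ c) := by
    have heq : halfStrip δ c = re ⁻¹' Iio c ∩ im ⁻¹' Ioo (-δ) δ := by
      ext s
      simp only [halfStrip, abs_lt, mem_ofPred_eq, mem_inter_iff, mem_preimage, mem_Iio, mem_Ioo]
    exact heq ▸ ((convex_Iio c).linear_preimage reLm).inter
      ((convex_Ioo (-δ) δ).linear_preimage imLm)
  exact hconv.isConnected ⟨((c - 1 : ℝ) : ℂ), by simp [halfStrip, hδ]⟩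

lemma isOpen_sector (hv : v ≠ 0) : IsOpen (sector v δ c) := by
  rw [sector, ← image_image (v * ·) exp]
  exact (Homeomorph.mulLeft₀ v hv).isOpenMap _ (isOpenMap_exp _ isOpen_halfStrip)

lemma isConnected_sector (hδ : 0 < δ) : IsConnected (sector v δ c) :=
  (isConnected_halfStrip hδ).image _ (by fun_prop)

lemma zero_notMem_sector (hv : v ≠ 0) : (0 : ℂ) ∉ sector v δ c := by
  rintro ⟨s, -, hs⟩
  exact mul_ne_zero hv (exp_ne_zero s) hs

lemma tendsto_const_mul_exp_comap_re_atBot (v : ℂ) :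
    Tendsto (fun s => v * exp s) (comap re atBot) (𝓝 0) := by
  simpa only [mul_zero] using tendsto_exp_comap_re_atBot.const_mul v

lemma eventually_atBot_forall_mem_sector {P : ℂ → Prop} (hP : ∀ᶠ z in 𝓝 0, P z) (v : ℂ) (δ : ℝ) :
    ∀ᶠ c in atBot, ∀ z ∈ sector v δ c, P z := by
  obtain ⟨t, ht, hts⟩ := mem_comap.1 ((tendsto_const_mul_exp_comap_re_atBot v).eventually hP)
  obtain ⟨b, hb⟩ := mem_atBot_sets.1 ht
  filter_upwards [eventually_le_atBot b] with c hc
  rintro _ ⟨s, hs, rfl⟩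
  exact hts (hb _ (hs.1.le.trans hc))

lemma disjoint_sector {a b : ℂ} {q : ℕ} (hq : q ≠ 0) (hab : a ≠ b) (hpow : a ^ q = b ^ q)
    (hδ : q * δ ≤ Real.pi) (c c' : ℝ) : Disjoint (sector a δ c) (sector b δ c') := by
  rw [Set.disjoint_left]
  rintro _ ⟨s, ⟨-, hs⟩, rfl⟩ ⟨t, ⟨-, ht⟩, hst⟩
  have hb : b ≠ 0 := by
    rintro rfl
    exact hab (eq_zero_of_pow_eq_zero (by rw [hpow, zero_pow hq]))
  have hexp : exp (q * (t - s)) = 1 := by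
    have hquot : exp (t - s) = a / b := by
      rw [exp_sub, div_eq_div_iff (exp_ne_zero s) hb]
      exact (mul_comm _ _).trans hst
    rw [exp_nat_mul, hquot, div_pow, hpow, div_self (pow_ne_zero q hb)]
  obtain ⟨n, hn⟩ := exp_eq_one_iff.1 hexp
  have him : (q : ℝ) * (t.im - s.im) = n * (2 * Real.pi) := by
    simpa using congrArg im hn
  have hn_lt : |(n : ℝ)| < 1 := by
    refine lt_of_mul_lt_mul_right ?_ Real.two_pi_pos.le
    calc |(n : ℝ)| * (2 * Real.pi) = q * |t.im - s.im| := by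
          rw [← abs_of_pos Real.two_pi_pos, ← abs_mul, ← him, abs_mul, Nat.abs_cast]
      _ < q * (2 * δ) := by
          gcongr
          exact (abs_sub _ _).trans_lt (by linarith)
      _ ≤ 1 * (2 * Real.pi) := by linarith
  have hn0 : n = 0 := Int.abs_lt_one_iff.1 (by exact_mod_cast hn_lt)
  have hts : t = s := by simpa [hn0, hq, sub_eq_zero] using hn
  exact hab (mul_right_cancel₀ (exp_ne_zero s) (hts ▸ hst).symm)

end Sector

/-! ### Logarithmic form of an analytic germ -/

section LogForm

lemma isEquivalent_log_one_add {α : Type*} {l : Filter α} {h : α → ℂ} (hh : Tendsto h l (𝓝 0)) :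
    (fun x => log (1 + h x)) ~[l] h := by
  have hlog : HasDerivAt log 1 1 := by simpa using hasDerivAt_log (z := 1) (by simp)
  have hlim : Tendsto (fun x => 1 + h x) l (𝓝 1) := by simpa using hh.const_add 1
  simpa [IsEquivalent, Function.comp_def, Pi.sub_def] using hlog.isLittleO.comp_tendsto hlim

lemma eq_mul_dslope_zero {𝕜 : Type*} [NontriviallyNormedField 𝕜] {g : 𝕜 → 𝕜} (hg0 : g 0 = 0)
    (z : 𝕜) : g z = z * dslope g 0 z := by
  simpa [hg0] using (sub_smul_dslope g 0 z).symm

lemma exists_tendsto_eq_mul_exp {g : ℂ → ℂ} {a : ℂ} (hg : HasDerivAt g a 0) (hg0 : g 0 = 0)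
    (ha : a ≠ 0) :
    ∃ L : ℂ → ℂ, Tendsto L (𝓝 0) (𝓝 0) ∧ ∀ᶠ z in 𝓝 0, g z = a * z * exp (L z) := by
  have hquot : Tendsto (fun z => dslope g 0 z / a) (𝓝 0) (𝓝 1) := by
    have hcont := (continuousAt_dslope_same.2 hg.differentiableAt).tendsto
    simpa [hg.deriv, ha] using hcont.div_const a
  refine ⟨fun z => log (dslope g 0 z / a), ?_, ?_⟩
  · simpa only [log_one] using hquot.clog one_mem_slitPlane
  · filter_upwards [hquot.eventually_ne one_ne_zero] with z hz
    rw [exp_log hz, eq_mul_dslope_zero hg0]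
    field_simp

lemma exists_isEquivalent_pow_eq_mul_exp {F : ℂ → ℂ} (hF : AnalyticAt ℂ F 0) (hF0 : F 0 = 0)
    (hF1 : deriv F 0 = 1) (hid : ¬ F =ᶠ[𝓝 0] id) :
    ∃ (m : ℕ) (a : ℂ) (L : ℂ → ℂ), m ≠ 0 ∧ a ≠ 0 ∧ (L ~[𝓝 0] fun z => a * z ^ m) ∧
      ∀ᶠ z in 𝓝 0, F z = z * exp (L z) := by
  obtain ⟨P, hP⟩ := hF
  have hD : AnalyticAt ℂ (fun z => dslope F 0 z - 1) 0 :=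
    (hP.has_fpower_series_dslope_fslope.analyticAt).sub analyticAt_const
  have hD_ne : ¬ ∀ᶠ z in 𝓝 0, dslope F 0 z - 1 = 0 := fun h => hid <| h.mono fun z hz => by
    rw [eq_mul_dslope_zero hF0, sub_eq_zero.1 hz, mul_one, id]
  obtain ⟨m, g, hg, hg0, hDg⟩ := hD.exists_eventuallyEq_pow_smul_nonzero_iff.2 hD_ne
  simp only [sub_zero, smul_eq_mul] at hDg
  have hm : m ≠ 0 := by
    rintro rfl
    exact hg0 (by simpa [hF1] using hDg.self_of_nhds.symm)
  have hlim : Tendsto (fun z => dslope F 0 z - 1) (𝓝 0) (𝓝 0) := by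
    simpa [hF1] using hD.continuousAt.tendsto
  refine ⟨m, g 0, fun z => log (1 + (dslope F 0 z - 1)), hm, hg0, ?_, ?_⟩
  · have hg_equiv : g ~[𝓝 0] fun _ => g 0 :=
      (isEquivalent_const_iff_tendsto hg0).2 hg.continuousAt.tendsto
    have hgz : (fun z => g z * z ^ m) ~[𝓝 0] fun z => g 0 * z ^ m := hg_equiv.mul .refl
    refine ((isEquivalent_log_one_add hlim).congr_right ?_).trans hgz
    exact hDg.mono fun z hz => hz.trans (mul_comm _ _)
  · have hne : ∀ᶠ z in 𝓝 0, dslope F 0 z - 1 ≠ -1 := hlim.eventually_ne (by simp)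
    filter_upwards [hne] with z hz
    rw [exp_log (by rwa [ne_eq, add_comm, add_eq_zero_iff_eq_neg]), add_sub_cancel,
      eq_mul_dslope_zero hF0]

lemma eventually_mapsTo_sector {g : ℂ → ℂ} {a : ℂ} (hg : HasDerivAt g a 0) (hg0 : g 0 = 0)
    (ha : a ≠ 0) (v : ℂ) {δ δ' : ℝ} (hδ : δ < δ') (c' : ℝ) :
    ∀ᶠ c in atBot, MapsTo g (sector v δ c) (sector (a * v) δ' c') := by
  obtain ⟨L, hL, hgL⟩ := exists_tendsto_eq_mul_exp hg hg0 ha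
  have hre : ∀ᶠ z in 𝓝 0, (L z).re < 1 :=
    ((continuous_re.tendsto 0).comp hL).eventually_lt_const (by simp)
  have him : ∀ᶠ z in 𝓝 0, |(L z).im| < δ' - δ :=
    ((continuous_im.abs.tendsto 0).comp hL).eventually_lt_const (by simpa using hδ)
  filter_upwards [eventually_atBot_forall_mem_sector (hgL.and (hre.and him)) v δ,
    eventually_le_atBot (c' - 1)] with c hc hcc'
  rintro _ ⟨s, hs, rfl⟩
  obtain ⟨hgs, hres, hims⟩ := hc _ ⟨s, hs, rfl⟩
  refine ⟨s + L (v * exp s), ⟨?_, ?_⟩, ?_⟩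
  · rw [add_re]
    linarith [hs.1]
  · rw [add_im]
    exact (abs_add_le _ _).trans_lt (by linarith [hs.2])
  · rw [hgs]
    simp only [exp_add]
    ring

end LogForm

/-! ### Invariant sectors of a germ tangent to the identity -/

section TangentToIdentity

lemma abs_sub_mul_sin_le {x t : ℝ} (hx : |x| ≤ 1) (ht0 : 0 ≤ t) (ht1 : t ≤ 1) :
    |x - t * Real.sin x| ≤ (1 - t / 2) * |x| := by
  wlog hx0 : 0 ≤ x generalizing x
  · have hneg := this (x := -x) (by rwa [abs_neg]) (by linarith)
    rwa [Real.sin_neg, mul_neg, ← neg_sub', abs_neg, abs_neg] at hneg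
  rw [abs_of_nonneg hx0] at hx ⊢
  have hsin_ge : x / 2 ≤ Real.sin x := by
    have hpi : 1 / 2 ≤ 2 / Real.pi := by
      rw [div_le_div_iff₀ two_pos Real.pi_pos]
      linarith [Real.pi_le_four]
    have hjordan := Real.mul_le_sin hx0 (by linarith [Real.pi_gt_three])
    nlinarith
  have hsin_le : Real.sin x ≤ x := Real.sin_le hx0
  rw [abs_of_nonneg (by nlinarith)]
  nlinarith

variable {u w : ℂ}

/- `u ↦ u - exp u` moves `Im u` towards `0` by at least `‖exp u‖ / 2 * |Im u|`, which at the
edge of the strip beats an error of relative size `η / 2`. -/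
lemma abs_im_add_lt_of_norm_add_exp_le {η : ℝ} (hη : η ≤ 1) (hre : u.re ≤ 0) (him : |u.im| < η)
    (hw : ‖w + exp u‖ ≤ η / 2 * ‖exp u‖) : |(u + w).im| < η := by
  set ρ := Real.exp u.re with hρ
  have hρ_pos : 0 < ρ := Real.exp_pos _
  have hρ_le : ρ ≤ 1 := Real.exp_le_one_iff.2 hre
  have herr : |(w + exp u).im| ≤ η / 2 * ρ := by
    rw [norm_exp] at hw
    exact (abs_im_le_norm _).trans hw
  calc |(u + w).im| = |(u.im - ρ * Real.sin u.im) + (w + exp u).im| := by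
        simp only [add_im, exp_im, hρ]
        ring_nf
    _ ≤ |u.im - ρ * Real.sin u.im| + |(w + exp u).im| := abs_add_le _ _
    _ ≤ (1 - ρ / 2) * |u.im| + η / 2 * ρ :=
        add_le_add (abs_sub_mul_sin_le (him.le.trans hη) hρ_pos.le hρ_le) herr
    _ < η := by nlinarith

lemma re_add_le_of_norm_add_exp_le (him : |u.im| ≤ 1) (hw : ‖w + exp u‖ ≤ 1 / 4 * ‖exp u‖) :
    (u + w).re ≤ u.re - Real.exp u.re / 4 := by
  have hρ_pos := Real.exp_pos u.re
  have herr : (w + exp u).re ≤ 1 / 4 * Real.exp u.re := by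
    rw [norm_exp] at hw
    exact (re_le_norm _).trans hw
  have hcos : 1 / 2 ≤ Real.cos u.im := by
    have hsq : u.im ^ 2 ≤ 1 := (sq_le_one_iff_abs_le_one _).2 him
    linarith [Real.one_sub_sq_div_two_le_cos (x := u.im)]
  rw [add_re, exp_re] at herr
  rw [add_re]
  nlinarith

variable {F T : ℂ → ℂ} {v : ℂ} {δ c : ℝ}

lemma isAttractingPetal_sector_of_semiconj (hv : v ≠ 0) (hδ : 0 < δ) {φ : ℝ → ℝ}
    (hφ : Continuous φ) (hφ_lt : ∀ x, φ x < x)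
    (hFT : ∀ s ∈ halfStrip δ c, F (v * exp s) = v * exp (T s))
    (him : ∀ s ∈ halfStrip δ c, |(T s).im| < δ)
    (hre : ∀ s ∈ halfStrip δ c, (T s).re ≤ φ s.re) :
    IsAttractingPetal F 1 (sector v δ c) := by
  have hT : MapsTo T (halfStrip δ c) (halfStrip δ c) := fun s hs =>
    ⟨(hre s hs).trans_lt ((hφ_lt _).trans hs.1), him s hs⟩
  refine ⟨isOpen_sector hv, isConnected_sector hδ, zero_notMem_sector hv, ?_, ?_⟩
  · rintro _ ⟨s, hs, rfl⟩
    exact ⟨T s, hT hs, (hFT s hs).symm⟩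
  · rintro _ ⟨s, hs, rfl⟩
    have hiter (n : ℕ) : F^[n] (v * exp s) = v * exp (T^[n] s) := by
      induction n with
      | zero => rfl
      | succ n ih =>
        rw [Function.iterate_succ_apply', Function.iterate_succ_apply', ih,
          hFT _ (hT.iterate n hs)]
    have hre_lim : Tendsto (fun n => (T^[n] s).re) atTop atBot :=
      tendsto_atBot_of_succ_le_map hφ hφ_lt fun n => by
        rw [Function.iterate_succ_apply']
        exact hre _ (hT.iterate n hs)
    simpa only [hiter, Function.comp_def] using
      (tendsto_const_mul_exp_comap_re_atBot v).comp (tendsto_comap_iff.2 hre_lim)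

lemma norm_natCast_mul_add_exp_le {m : ℕ} {a s : ℂ} {ε : ℝ} (hv : m * (a * v ^ m) = -1)
    (hw : ‖w - a * (v * exp s) ^ m‖ ≤ ε * ‖a * (v * exp s) ^ m‖) :
    ‖m * w + exp (m * s)‖ ≤ ε * ‖exp (m * s)‖ := by
  have hlead : exp (m * s) = -(m * (a * (v * exp s) ^ m)) := by
    rw [mul_pow, ← exp_nat_mul]
    linear_combination exp (m * s) * hv
  rw [hlead, ← sub_eq_add_neg, ← mul_sub, norm_neg, norm_mul, norm_mul, mul_left_comm]
  gcongr

lemma eventually_isAttractingPetal_sector {L : ℂ → ℂ} {m : ℕ} {a : ℂ}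
    (hL : L ~[𝓝 0] fun z => a * z ^ m) (hFL : ∀ᶠ z in 𝓝 0, F z = z * exp (L z)) (hm : m ≠ 0)
    (hv : m * (a * v ^ m) = -1) (hδ : 0 < δ) (hmδ : m * δ ≤ 1) :
    ∀ᶠ c in atBot, IsAttractingPetal F 1 (sector v δ c) := by
  have hm_pos : (0 : ℝ) < m := by positivity
  have hv0 : v ≠ 0 := by
    rintro rfl
    simp [hm] at hv
  have herr : ∀ᶠ z in 𝓝 0, ‖L z - a * z ^ m‖ ≤ m * δ / 4 * ‖a * z ^ m‖ :=
    hL.isLittleO.bound (by positivity)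
  filter_upwards [eventually_atBot_forall_mem_sector (hFL.and herr) v δ,
    eventually_le_atBot 0] with c hc hc0
  have hmul_re (s : ℂ) : (m * s).re = m * s.re := by simp
  have hmul_im (s : ℂ) : (m * s).im = m * s.im := by simp
  have him_lt (s : ℂ) : |s.im| < δ ↔ |(m * s).im| < m * δ := by
    rw [hmul_im, abs_mul, Nat.abs_cast, mul_lt_mul_iff_right₀ hm_pos]
  have hlog (s : ℂ) (hs : s ∈ halfStrip δ c) :=
    norm_natCast_mul_add_exp_le hv (hc _ ⟨s, hs, rfl⟩).2
  refine isAttractingPetal_sector_of_semiconj (T := fun s => s + L (v * exp s))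
    (φ := fun x => x - Real.exp (m * x) / (4 * m)) hv0 hδ (by fun_prop)
    (fun x => sub_lt_self _ (by positivity)) (fun s hs => ?_) (fun s hs => ?_) (fun s hs => ?_)
  · rw [(hc _ ⟨s, hs, rfl⟩).1, exp_add, mul_assoc]
  · rw [him_lt, mul_add]
    refine abs_im_add_lt_of_norm_add_exp_le hmδ ?_ ((him_lt s).1 hs.2) ((hlog s hs).trans ?_)
    · rw [hmul_re]
      exact mul_nonpos_of_nonneg_of_nonpos hm_pos.le (hs.1.le.trans hc0)
    · gcongr
      norm_num
  · have hdecr := re_add_le_of_norm_add_exp_le (((him_lt s).1 hs.2).le.trans hmδ)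
      ((hlog s hs).trans (by gcongr))
    rw [← mul_add, hmul_re, hmul_re] at hdecr
    rw [← mul_le_mul_iff_right₀ hm_pos]
    refine hdecr.trans_eq ?_
    field_simp

lemma exists_isAttractingPetal_sector (hF : AnalyticAt ℂ F 0) (hF0 : F 0 = 0)
    (hF1 : deriv F 0 = 1) (hid : ¬ F =ᶠ[𝓝 0] id) :
    ∃ v ≠ 0, ∀ᶠ δ in 𝓝[>] 0, ∀ᶠ c in atBot, IsAttractingPetal F 1 (sector v δ c) := by
  obtain ⟨m, a, L, hm, ha, hL, hFL⟩ := exists_isEquivalent_pow_eq_mul_exp hF hF0 hF1 hid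
  have hma : (m : ℂ) * a ≠ 0 := mul_ne_zero (Nat.cast_ne_zero.2 hm) ha
  -- normalised so that in the coordinate `u = m * s` the map becomes `u ↦ u - exp u + ⋯`
  obtain ⟨v, hv⟩ := IsAlgClosed.exists_pow_nat_eq (-((m : ℂ) * a)⁻¹) (Nat.pos_of_ne_zero hm)
  have hv0 : v ≠ 0 := by
    rintro rfl
    simp [hm, ha] at hv
  have hm_pos : (0 : ℝ) < m := by positivity
  refine ⟨v, hv0, ?_⟩
  filter_upwards [Ioo_mem_nhdsGT (one_div_pos.2 hm_pos)] with δ hδ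
  refine eventually_isAttractingPetal_sector hL hFL hm ?_ hδ.1 ((lt_div_iff₀' hm_pos).1 hδ.2).le
  rw [← mul_assoc, hv, mul_neg, mul_inv_cancel₀ hma]

end TangentToIdentity

/-! ### The flower theorem -/

section Flower

variable {f : ℂ → ℂ} {q : ℕ}

lemma eventually_iterate_analyticAt_and_deriv_ne_zero (hf : AnalyticAt ℂ f 0) (hf0 : f 0 = 0)
    (hf' : deriv f 0 ≠ 0) (j : ℕ) :
    ∀ᶠ z in 𝓝 0, AnalyticAt ℂ f^[j] z ∧ deriv f^[j] z ≠ 0 := by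
  have hj : AnalyticAt ℂ f^[j] 0 := analyticAt_iterate hf hf0 j
  refine hj.eventually_analyticAt.and (hj.deriv.continuousAt.eventually_ne ?_)
  rw [(hf.differentiableAt.hasDerivAt.iterate 0 hf0 j).deriv]
  exact pow_ne_zero j hf'

lemma exists_isAttractingPetal_mapsTo_sector (hf : AnalyticAt ℂ f 0) (hf0 : f 0 = 0)
    (hω : IsPrimitiveRoot (deriv f 0) q) (hid : ¬ f^[q] =ᶠ[𝓝 0] id) :
    ∃ (V : Set ℂ) (v : ℂ), v ≠ 0 ∧ IsAttractingPetal f q V ∧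
      ∀ j < q, AnalyticOnNhd ℂ f^[j] V ∧ (∀ z ∈ V, deriv f^[j] z ≠ 0) ∧
        MapsTo f^[j] V (sector (deriv f 0 ^ j * v) (Real.pi / q) 0) := by
  have hq : q ≠ 0 := ne_zero_of_not_iterate_eventuallyEq_id hid
  have hq_pos : (0 : ℝ) < q := by positivity
  have hω0 : deriv f 0 ≠ 0 := hω.ne_zero hq
  have hderiv (j : ℕ) : HasDerivAt f^[j] (deriv f 0 ^ j) 0 :=
    hf.differentiableAt.hasDerivAt.iterate 0 hf0 j
  obtain ⟨v, hv, hpetal⟩ := exists_isAttractingPetal_sector (analyticAt_iterate hf hf0 q)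
    (Function.iterate_fixed hf0 q) ((hderiv q).deriv.trans hω.pow_eq_one) hid
  obtain ⟨δ, hδ_petal, -, hδ_lt⟩ :=
    (hpetal.and (Ioo_mem_nhdsGT (div_pos Real.pi_pos hq_pos))).exists
  have hreg : ∀ᶠ c in atBot, ∀ j ∈ Finset.range q, ∀ z ∈ sector v δ c,
      AnalyticAt ℂ f^[j] z ∧ deriv f^[j] z ≠ 0 :=
    (eventually_all_finset _).2 fun j _ => eventually_atBot_forall_mem_sector
      (eventually_iterate_analyticAt_and_deriv_ne_zero hf hf0 hω0 j) v δ
  have hmaps : ∀ᶠ c in atBot, ∀ j ∈ Finset.range q,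
      MapsTo f^[j] (sector v δ c) (sector (deriv f 0 ^ j * v) (Real.pi / q) 0) :=
    (eventually_all_finset _).2 fun j _ => eventually_mapsTo_sector (hderiv j)
      (Function.iterate_fixed hf0 j) (pow_ne_zero j hω0) v hδ_lt 0
  obtain ⟨c, hc_petal, hc_reg, hc_maps⟩ := (hδ_petal.and (hreg.and hmaps)).exists
  refine ⟨sector v δ c, v, hv, .of_iterate hq hf.continuousAt hf0 hc_petal,
    fun j hj => ?_⟩
  rw [← Finset.mem_range] at hj
  exact ⟨fun z hz => (hc_reg j hj z hz).1, fun z hz => (hc_reg j hj z hz).2, hc_maps j hj⟩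

theorem exists_cycle_isAttractingPetal (hf : AnalyticAt ℂ f 0) (hf0 : f 0 = 0)
    (hω : IsPrimitiveRoot (deriv f 0) q) (hid : ¬ f^[q] =ᶠ[𝓝 0] id) :
    ∃ U : ZMod q → Set ℂ, Pairwise (fun j k => Disjoint (U j) (U k)) ∧
      (∀ j, IsAttractingPetal f q (U j)) ∧ ∀ j, MapsTo f (U j) (U (j + 1)) := by
  have hq : q ≠ 0 := ne_zero_of_not_iterate_eventuallyEq_id hid
  have : NeZero q := ⟨hq⟩
  obtain ⟨V, v, hv, hV, hVj⟩ := exists_isAttractingPetal_mapsTo_sector hf hf0 hω hid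
  refine ⟨fun j => f^[j.val] '' V, fun j k hjk => ?_, fun j => ?_,
    mapsTo_image_iterate_val_add_one hV.mapsTo⟩
  · have hne : deriv f 0 ^ j.val * v ≠ deriv f 0 ^ k.val * v := fun h =>
      hjk (ZMod.val_injective q (hω.pow_inj j.val_lt k.val_lt (mul_right_cancel₀ hv h)))
    have hpow : (deriv f 0 ^ j.val * v) ^ q = (deriv f 0 ^ k.val * v) ^ q := by
      simp only [mul_pow, pow_right_comm _ _ q, hω.pow_eq_one, one_pow]
    have hangle : q * (Real.pi / q) ≤ Real.pi := (mul_div_cancel₀ _ (by positivity)).le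
    exact (disjoint_sector hq hne hpow hangle 0 0).mono
      (hVj j.val j.val_lt).2.2.image_subset (hVj k.val k.val_lt).2.2.image_subset
  · obtain ⟨hanalytic, hderiv, -⟩ := hVj j.val j.val_lt
    exact hV.image_iterate hq hf0 hanalytic hderiv

theorem attracting_petals_exist_general (hf : AnalyticAt ℂ f 0) (hf0 : f 0 = 0)
    (hω : IsPrimitiveRoot (deriv f 0) q) (hid : ¬ f^[q] =ᶠ[𝓝 0] id) {p : ℕ}
    (hcop : Nat.Coprime p q) :
    ∃ U : ZMod q → Set ℂ,
      Pairwise (fun j k => Disjoint (U j) (U k)) ∧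
      (∀ j, U j ⊆ {z | Tendsto (fun n => f^[n] z) atTop (𝓝 0)} \ {z | ∃ n, f^[n] z = 0}) ∧
      (∀ j, IsOpen (U j)) ∧
      (∀ j, IsConnected (U j)) ∧
      (∀ j, (0 : ℂ) ∈ frontier (U j)) ∧
      (∀ j, f '' U j ⊆ U (j + (p : ZMod q))) ∧
      (∀ j, f^[q] '' U j ⊆ U j) ∧
      (∀ j, ∀ z ∈ U j, Tendsto (fun n => f^[n] z) atTop (𝓝 0)) := by
  have hq : q ≠ 0 := ne_zero_of_not_iterate_eventuallyEq_id hid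
  obtain ⟨U, hdisj, hU, hfU⟩ := exists_cycle_isAttractingPetal hf hf0 hω hid
  have hp : (p : ZMod q) * (p : ZMod q)⁻¹ = 1 := ZMod.coe_mul_inv_eq_one p hcop
  have hinj : Function.Injective fun j : ZMod q => j * (p : ZMod q)⁻¹ :=
    (IsUnit.of_mul_eq_one_right _ hp).mul_left_injective
  refine ⟨fun j => U (j * (p : ZMod q)⁻¹), hdisj.comp_of_injective hinj, fun j z hz => ⟨?_, ?_⟩,
    fun j => (hU _).isOpen, fun j => (hU _).isConnected, fun j => (hU _).zero_mem_frontier hq,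
    fun j => ?_, fun j => (hU _).mapsTo.image_subset, fun j => (hU _).tendsto⟩
  · exact (hU _).tendsto z hz
  · rintro ⟨n, hn⟩
    exact (hU _).iterate_ne_zero hq hf0 hz n hn
  · simpa only [add_mul, hp] using (hfU (j * (p : ZMod q)⁻¹)).image_subset

end Flower

/-! ### The quadratic family -/

section Quadratic

lemma differentiable_Pq (ω : ℂ) : Differentiable ℂ (Pq ω) := by
  unfold Pq
  fun_prop

lemma deriv_Pq_zero (ω : ℂ) : deriv (Pq ω) 0 = ω := by
  have hpoly : HasDerivAt (Pq ω) (ω * 1 + 2 * 0 ^ 1 * 1) 0 :=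
    ((hasDerivAt_id' 0).const_mul ω).fun_add ((hasDerivAt_id' 0).fun_pow 2)
  simpa using hpoly.deriv

lemma not_iterate_Pq_eventuallyEq_id {ω : ℂ} (hω : ω ≠ 0) {q : ℕ} (hq : q ≠ 0) :
    ¬ (Pq ω)^[q] =ᶠ[𝓝 0] id := by
  intro h
  have hiter : Differentiable ℂ (Pq ω)^[q] := (differentiable_Pq ω).iterate q
  have heq : (Pq ω)^[q] = id := AnalyticOnNhd.eq_of_eventuallyEq
    (fun z _ => hiter.analyticAt z) (fun z _ => analyticAt_id) h
  obtain ⟨n, rfl⟩ := Nat.exists_eq_succ_of_ne_zero hq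
  have hinj : Function.Injective (Pq ω) := .of_comp (f := (Pq ω)^[n]) (by
    rw [← Function.iterate_succ, heq]
    exact Function.injective_id)
  have hcollide : Pq ω (-ω) = Pq ω 0 := by simp [Pq, sq]
  exact hω (neg_eq_zero.1 (hinj hcollide))

lemma isPrimitiveRoot_exp_mul_div {p q : ℕ} (hq : q ≠ 0) (hcop : Nat.Coprime p q) :
    IsPrimitiveRoot (exp (2 * Real.pi * I * (p : ℂ) / (q : ℂ))) q := by
  simpa only [mul_div_assoc] using isPrimitiveRoot_exp_of_coprime p q hq hcop

end Quadratic


/-- Leau–Fatou attracting petals exist for `P_ω`: there are `q`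
pairwise disjoint open connected subsets `U j ⊆ Λ_ω`, each with `0` on its
frontier, with `P_ω (U j) ⊆ U (j + p)` (so `P_ω^[q] (U j) ⊆ U j`), and every
orbit starting in a petal converges to `0`. -/
theorem attracting_petals_exist
    (p q : ℕ) (hq : 2 ≤ q) (hp0 : 0 < p) (hpq : p < q) (hcop : Nat.Coprime p q)
    (ω : ℂ) (hω : ω = Complex.exp (2 * Real.pi * Complex.I * (p : ℂ) / (q : ℂ))) :
    ∃ U : ZMod q → Set ℂ,
      Pairwise (fun j k => Disjoint (U j) (U k)) ∧
      (∀ j, U j ⊆ basin ω) ∧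
      (∀ j, IsOpen (U j)) ∧
      (∀ j, IsConnected (U j)) ∧
      (∀ j, (0 : ℂ) ∈ frontier (U j)) ∧
      (∀ j, Pq ω '' U j ⊆ U (j + (p : ZMod q))) ∧
      (∀ j, (Pq ω)^[q] '' U j ⊆ U j) ∧
      (∀ j, ∀ z ∈ U j, Tendsto (fun n => (Pq ω)^[n] z) atTop (𝓝 0)) := by
  have hq0 : q ≠ 0 := by omega
  have hprim : IsPrimitiveRoot ω q := hω ▸ isPrimitiveRoot_exp_mul_div hq0 hcop
  exact attracting_petals_exist_general ((differentiable_Pq ω).analyticAt 0) (by simp [Pq])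
    ((deriv_Pq_zero ω).symm ▸ hprim) (not_iterate_Pq_eventuallyEq_id (hprim.ne_zero hq0) hq0) hcop
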